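/- Fix an integer d ≥ 1, p ∈ (1,∞), a penalty function φ, and let (μ_t)_{t≥0} be a convolution semigroup in 𝒫_p(ℝ^d). Then for every t ≥ 0 and f, g ∈ C₀(ℝ^d): (i) the decreasing pointwise limit 𝒮(t)f := lim_{n→∞} 𝒮^n(t)f exists and the convergence is uniform on ℝ^d; (ii) 𝒮(t)f ∈ C₀(ℝ^d); (iii) 𝒮(t)0 = 0; (iv) f ≤ g implies 𝒮(t)f ≤ 𝒮(t)g; (v) ‖𝒮(t)f − 𝒮(t)g‖_∞ ≤ ‖f − g‖_∞; (vi) 𝒮(t)(λf + (1−λ)g)(x) ≤ λ𝒮(t)f(x) + (1−λ)𝒮(t)g(x) for all λ ∈ [0,1] and x ∈ ℝ^d. -/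

import Mathlib

open MeasureTheory Filter Topology ENNReal NNReal Set ZeroAtInfty
noncomputable section

/-- Euclidean space ℝ^d. -/
abbrev Ed (d : ℕ) := EuclideanSpace ℝ (Fin d)

/-- `𝒫_p(ℝ^d)`: Borel probability measures with finite `p`-th moment. -/
def MemPp {d : ℕ} (p : ℝ) (μ : Measure (Ed d)) : Prop :=
  IsProbabilityMeasure μ ∧ ∫⁻ x, (‖x‖₊ : ℝ≥0∞) ^ p ∂μ < ∞

/-- `γ` is a coupling of `μ` and `ν`. -/
def IsCoupling {d : ℕ} (γ : Measure (Ed d × Ed d)) (μ ν : Measure (Ed d)) : Prop :=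
  γ.map Prod.fst = μ ∧ γ.map Prod.snd = ν

/-- The `p`-Wasserstein distance `𝒲_p(μ, ν)`. -/
def Wp {d : ℕ} (p : ℝ) (μ ν : Measure (Ed d)) : ℝ :=
  (⨅ γ ∈ {γ : Measure (Ed d × Ed d) | IsCoupling γ μ ν},
    (∫⁻ q, (‖q.2 - q.1‖₊ : ℝ≥0∞) ^ p ∂γ) ^ (1 / p)).toReal

/-- The scaled penalty `φ_t(r) = t·φ(r/t)` for `t > 0`; `φ_0(0) = 0`, `φ_0(r) = ∞` for `r > 0`. -/
def phit (φ : ℝ≥0 → ℝ≥0∞) (t : ℝ) (r : ℝ≥0) : ℝ≥0∞ :=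
  if 0 < t then (t.toNNReal : ℝ≥0∞) * φ (r / t.toNNReal) else (if r = 0 then 0 else ∞)

/-- `φ` is a penalty function: lower semicontinuous, convex, increasing, not constant,
`φ(0) = 0`, and `x ↦ φ(x^{1/p})` is convex. -/
structure IsPenalty (p : ℝ) (φ : ℝ≥0 → ℝ≥0∞) : Prop where
  lsc : LowerSemicontinuous φ
  convex : ∀ a b l m : ℝ≥0, l + m = 1 →
    φ (l * a + m * b) ≤ (l : ℝ≥0∞) * φ a + (m : ℝ≥0∞) * φ b
  mono : Monotone φ
  not_const : ∃ a b, φ a ≠ φ b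
  map_zero : φ 0 = 0
  convex_rpow : ∀ a b l m : ℝ≥0, l + m = 1 →
    φ ((l * a + m * b) ^ (1 / p)) ≤ (l : ℝ≥0∞) * φ (a ^ (1 / p)) + (m : ℝ≥0∞) * φ (b ^ (1 / p))

/-- The convex conjugate `φ*(y) = sup_{x ≥ 0} (xy − φ(x))`. -/
def phiStar (φ : ℝ≥0 → ℝ≥0∞) (y : ℝ≥0) : ℝ≥0∞ :=
  ⨆ x : ℝ≥0, ((x * y : ℝ≥0) : ℝ≥0∞) - φ x

/-- The one-step operator `S(t)f(x) = sup_ν ( ∫ f(x+y) ν(dy) − φ_t(𝒲_p(μ_t, ν)) )`. -/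
def Sop {d : ℕ} (p : ℝ) (φ : ℝ≥0 → ℝ≥0∞) (μt : Measure (Ed d)) (t : ℝ)
    (f : Ed d → ℝ) (x : Ed d) : ℝ :=
  sSup { r : ℝ | ∃ ν : Measure (Ed d), MemPp p ν ∧ ∃ c : ℝ, 0 ≤ c ∧
    phit φ t (Wp p μt ν).toNNReal ≤ ENNReal.ofReal c ∧ r = (∫ y, f (x + y) ∂ν) - c }

/-- The iterated operator `𝒮ⁿ(t) = S(2⁻ⁿ)^{∘ k} ∘ S(t − k·2⁻ⁿ)`, `k = ⌊2ⁿ t⌋`. -/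
def SiterN {d : ℕ} (p : ℝ) (φ : ℝ≥0 → ℝ≥0∞) (μ : ℝ → Measure (Ed d)) (n : ℕ) (t : ℝ)
    (f : Ed d → ℝ) : Ed d → ℝ :=
  (fun g => Sop p φ (μ ((2 : ℝ) ^ n)⁻¹) ((2 : ℝ) ^ n)⁻¹ g)^[⌊(2:ℝ)^n * t⌋₊]
    (Sop p φ (μ (t - ⌊(2:ℝ)^n * t⌋₊ * ((2:ℝ)^n)⁻¹)) (t - ⌊(2:ℝ)^n * t⌋₊ * ((2:ℝ)^n)⁻¹) f)

/-- The limiting operator `𝒮(t)f = lim_n 𝒮ⁿ(t)f` (a decreasing limit, i.e. an infimum). -/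
def Slim {d : ℕ} (p : ℝ) (φ : ℝ≥0 → ℝ≥0∞) (μ : ℝ → Measure (Ed d)) (t : ℝ)
    (f : Ed d → ℝ) (x : Ed d) : ℝ :=
  ⨅ n : ℕ, SiterN p φ μ n t f x

/-- `f ∈ C₀(ℝ^d)`: continuous and vanishing at infinity. -/
def IsC0 {d : ℕ} (f : Ed d → ℝ) : Prop :=
  Continuous f ∧ Tendsto f (cocompact (Ed d)) (𝓝 0)

/-- `(μ_t)_{t ≥ 0}` is a convolution semigroup in `𝒫_p(ℝ^d)`. -/
def IsConvSemigroup {d : ℕ} (p : ℝ) (μ : ℝ → Measure (Ed d)) : Prop :=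
  μ 0 = Measure.dirac 0 ∧ (∀ s t : ℝ, 0 ≤ s → 0 ≤ t → μ (s + t) = (μ s).conv (μ t)) ∧
    ∀ t : ℝ, 0 ≤ t → MemPp p (μ t)

/-- `𝒲_p(μ_t, δ_0) → 0` as `t ↓ 0`. -/
def WContinuousAtZero {d : ℕ} (p : ℝ) (μ : ℝ → Measure (Ed d)) : Prop :=
  Tendsto (fun t => Wp p (μ t) (Measure.dirac 0)) (𝓝[>] (0:ℝ)) (𝓝 0)

/-- The semigroup of the underlying Lévy process, `S^μ(t)f(x) = ∫ f(x+y) μ_t(dy)`. -/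
def Smu {d : ℕ} (μ : ℝ → Measure (Ed d)) (t : ℝ) (f : Ed d → ℝ) (x : Ed d) : ℝ :=
  ∫ y, f (x + y) ∂(μ t)

/-- `f ∈ D(A^μ)` with `A^μ f = Af`: `(S^μ(t)f − f)/t → Af` uniformly as `t ↓ 0`. -/
def HasGenerator {d : ℕ} (μ : ℝ → Measure (Ed d)) (f Af : Ed d → ℝ) : Prop :=
  TendstoUniformly (fun t x => (Smu μ t f x - f x) / t) Af (𝓝[>] (0:ℝ))

/-- `f ∈ C₀¹(ℝ^d)`: continuously differentiable, vanishing at infinity, with gradient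
vanishing at infinity. -/
def IsC01 {d : ℕ} (f : Ed d → ℝ) : Prop :=
  IsC0 f ∧ ContDiff ℝ 1 f ∧ Tendsto (fun x => gradient f x) (cocompact (Ed d)) (𝓝 0)

/-!
Each `S(t)` is a normalized, monotone, convex, translation-covariant operator, and it preserves
`C₀(ℝ^d)` because the penalty grows at least linearly, so that transporting mass from far away is
expensive. Rewriting the supremum over target measures as one over transport plans, two plans can be
glued together: Minkowski's inequality adds their displacements in `L^p`, and convexity of
`r ↦ φ_t(r^{1/p})` averages the penalties. This gives `S(s) ∘ S(t) ≤ S(s + t)`, hence the dyadic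
iterates `𝒮ⁿ(t)f` decrease in `n`. By convexity and normalization,
`-𝒮⁰(t)(-f) ≤ -𝒮ⁿ(t)(-f) ≤ 𝒮ⁿ(t)f ≤ 𝒮⁰(t)f`, which keeps the limit finite and vanishing at infinity;
all other properties pass to pointwise limits, and Dini's theorem makes the convergence uniform.
-/

/-! ### Bounded uniformly continuous functions and functions vanishing at infinity -/

/-- Bounded uniformly continuous real functions. The operators `S(t)` preserve this class without
any condition at infinity, which lets them be iterated before vanishing at infinity is studied. -/
structure IsBUC {X : Type*} [PseudoMetricSpace X] (f : X → ℝ) : Prop where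
  uniformContinuous : UniformContinuous f
  exists_abs_le : ∃ M, ∀ x, |f x| ≤ M

namespace IsBUC

variable {X : Type*} [PseudoMetricSpace X] {f g : X → ℝ}

lemma const (c : ℝ) : IsBUC fun _ : X => c :=
  ⟨uniformContinuous_const, |c|, fun _ => le_rfl⟩

lemma const_mul (hf : IsBUC f) (l : ℝ) : IsBUC fun x => l * f x := by
  obtain ⟨M, hM⟩ := hf.exists_abs_le
  refine ⟨hf.uniformContinuous.const_smul l, |l| * M, fun x => ?_⟩
  rw [abs_mul]
  exact mul_le_mul_of_nonneg_left (hM x) (abs_nonneg l)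

lemma neg (hf : IsBUC f) : IsBUC fun x => -f x := by
  simpa only [neg_one_mul] using hf.const_mul (-1)

lemma add (hf : IsBUC f) (hg : IsBUC g) : IsBUC fun x => f x + g x := by
  obtain ⟨M, hM⟩ := hf.exists_abs_le
  obtain ⟨N, hN⟩ := hg.exists_abs_le
  exact ⟨hf.uniformContinuous.add hg.uniformContinuous, M + N,
    fun x => (abs_add_le _ _).trans (add_le_add (hM x) (hN x))⟩

lemma convex_combination (hf : IsBUC f) (hg : IsBUC g) (l : ℝ) :
    IsBUC fun x => l * f x + (1 - l) * g x :=
  (hf.const_mul l).add (hg.const_mul (1 - l))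

lemma comp_add_left {E : Type*} [SeminormedAddCommGroup E] {f : E → ℝ} (hf : IsBUC f) (x : E) :
    IsBUC fun y => f (x + y) :=
  ⟨hf.uniformContinuous.comp (uniformContinuous_const.add uniformContinuous_id),
    hf.exists_abs_le.imp fun _ hM y => hM (x + y)⟩

lemma integrable_comp [MeasurableSpace X] [OpensMeasurableSpace X] {Ω : Type*} [MeasurableSpace Ω]
    {γ : Measure Ω} [IsFiniteMeasure γ] (hf : IsBUC f) {u : Ω → X} (hu : Measurable u) :
    Integrable (fun ω => f (u ω)) γ := by
  obtain ⟨M, hM⟩ := hf.exists_abs_le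
  exact .of_bound (hf.uniformContinuous.continuous.measurable.comp hu).aestronglyMeasurable M
    (ae_of_all _ fun ω => hM (u ω))

lemma exists_le_add_mul_dist (hf : IsBUC f) {ε : ℝ} (hε : 0 < ε) :
    ∃ C, 0 ≤ C ∧ ∀ a b, f a ≤ f b + ε + C * dist a b := by
  obtain ⟨M, hM⟩ := hf.exists_abs_le
  obtain ⟨δ, hδ, hfδ⟩ := Metric.uniformContinuous_iff.1 hf.uniformContinuous ε hε
  refine ⟨2 * |M| / δ, by positivity, fun a b => ?_⟩
  rcases lt_or_ge (dist a b) δ with hab | hab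
  · have hclose := (abs_lt.1 (hfδ hab)).2
    have : 0 ≤ 2 * |M| / δ * dist a b := by positivity
    linarith
  · have hfar : 2 * |M| ≤ 2 * |M| / δ * dist a b := by
      rw [div_mul_eq_mul_div, le_div_iff₀ hδ]
      gcongr
    linarith [(abs_le.1 (hM a)).2, (abs_le.1 (hM b)).1, le_abs_self M]

end IsBUC

section VanishingAtInfinity

variable {d : ℕ} {f : Ed d → ℝ}

lemma isC0_coe (f : C₀(Ed d, ℝ)) : IsC0 f :=
  ⟨f.continuous, f.zero_at_infty'⟩

lemma IsC0.isBUC (hf : IsC0 f) : IsBUC f := by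
  let F : C₀(Ed d, ℝ) := ⟨⟨f, hf.1⟩, hf.2⟩
  obtain ⟨M, hM⟩ := F.isBounded_range.exists_norm_le
  exact ⟨ZeroAtInftyContinuousMap.uniformContinuous F, M, fun x => hM _ (mem_range_self x)⟩

lemma IsC0.neg (hf : IsC0 f) : IsC0 fun x => -f x :=
  ⟨hf.1.neg, by simpa only [neg_zero] using hf.2.neg⟩

lemma IsC0.eventually_abs_add_le (hf : IsC0 f) {ε η : ℝ} (hε : 0 < ε) (hη : 0 < η) :
    ∀ᶠ x in cocompact (Ed d), ∀ y, |f (x + y)| ≤ ε + η * ‖y‖ := by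
  obtain ⟨M, hM⟩ := hf.isBUC.exists_abs_le
  have hsmall : ∀ᶠ x in cocompact (Ed d), |f x| < ε := by
    simpa [Real.norm_eq_abs] using Metric.tendsto_nhds.1 hf.2 ε hε
  rw [← Metric.cobounded_eq_cocompact, ← comap_norm_atTop, eventually_comap,
    eventually_atTop] at hsmall
  obtain ⟨ρ, hρ⟩ := hsmall
  filter_upwards [(tendsto_norm_cocompact_atTop (E := Ed d)).eventually_ge_atTop (ρ + M / η)]
    with x hx y
  rcases le_total ρ ‖x + y‖ with hfar | hnear
  · have := hρ _ hfar _ rfl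
    have : 0 ≤ η * ‖y‖ := by positivity
    linarith
  · have hy : M / η ≤ ‖y‖ := by linarith [norm_le_add_norm_add x y]
    rw [div_le_iff₀' hη] at hy
    linarith [hM (x + y)]

end VanishingAtInfinity

lemma tendstoUniformly_of_antitone_of_tendsto_cocompact {X : Type*} [TopologicalSpace X]
    {F : ℕ → X → ℝ} {f : X → ℝ} (hF : ∀ n, Continuous (F n)) (hf : Continuous f)
    (hanti : ∀ x, Antitone fun n => F n x) (hlim : ∀ x, Tendsto (fun n => F n x) atTop (𝓝 (f x)))
    (hF0 : Tendsto (F 0) (cocompact X) (𝓝 0)) (hf0 : Tendsto f (cocompact X) (𝓝 0)) :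
    TendstoUniformly F f atTop := by
  rw [Metric.tendstoUniformly_iff]
  intro ε hε
  have htail : ∀ᶠ x in cocompact X, F 0 x - f x < ε := by
    have h := hF0.sub hf0
    rw [sub_zero] at h
    exact h.eventually_lt_const hε
  obtain ⟨K, hK, hKε⟩ := mem_cocompact.1 htail
  have hunif : TendstoUniformlyOn F f atTop K :=
    Antitone.tendstoUniformlyOn_of_forall_tendsto hK (fun n => (hF n).continuousOn)
      (fun x _ => hanti x) hf.continuousOn (fun x _ => hlim x)
  filter_upwards [Metric.tendstoUniformlyOn_iff.1 hunif ε hε] with n hn x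
  by_cases hx : x ∈ K
  · exact hn x hx
  · have hge : f x ≤ F n x := (hanti x).le_of_tendsto (hlim x) n
    have hle : F n x ≤ F 0 x := hanti x n.zero_le
    have htail_x : F 0 x - f x < ε := hKε hx
    rw [Real.dist_eq, abs_sub_comm, abs_of_nonneg (sub_nonneg.2 hge)]
    linarith

/-! ### Convex expectations and their dyadic iterates -/

/-- Normalized, monotone, convex, translation-covariant operators that preserve vanishing at
infinity. The field `le_add` compares values at different base points: it combines monotonicity,
subadditivity with respect to constants and covariance under translations. -/
structure IsConvexExpectation {d : ℕ} (T : (Ed d → ℝ) → Ed d → ℝ) : Prop where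
  le_add : ∀ {f g : Ed d → ℝ}, IsBUC f → IsBUC g → ∀ {x x' : Ed d} {K : ℝ},
    (∀ y, f (x + y) ≤ g (x' + y) + K) → T f x ≤ T g x' + K
  map_zero : ∀ x, T (fun _ => 0) x = 0
  convex : ∀ {f g : Ed d → ℝ}, IsBUC f → IsBUC g → ∀ {l : ℝ}, 0 ≤ l → l ≤ 1 → ∀ x,
    T (fun y => l * f y + (1 - l) * g y) x ≤ l * T f x + (1 - l) * T g x
  tendsto_cocompact : ∀ {f : Ed d → ℝ}, IsC0 f → Tendsto (T f) (cocompact (Ed d)) (𝓝 0)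

namespace IsConvexExpectation

variable {d : ℕ} {T U : (Ed d → ℝ) → Ed d → ℝ} {f g : Ed d → ℝ}

lemma le_add_const (hT : IsConvexExpectation T) (hf : IsBUC f) (hg : IsBUC g) {K : ℝ}
    (h : ∀ y, f y ≤ g y + K) (x : Ed d) : T f x ≤ T g x + K :=
  hT.le_add hf hg fun y => h (x + y)

lemma mono (hT : IsConvexExpectation T) (hf : IsBUC f) (hg : IsBUC g) (h : ∀ y, f y ≤ g y)
    (x : Ed d) : T f x ≤ T g x := by
  simpa only [add_zero] using hT.le_add_const hf hg (K := 0) (by simpa only [add_zero] using h) x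

lemma abs_sub_le (hT : IsConvexExpectation T) (hf : IsBUC f) (hg : IsBUC g) {K : ℝ}
    (h : ∀ y, |f y - g y| ≤ K) (x : Ed d) : |T f x - T g x| ≤ K := by
  rw [abs_sub_le_iff]
  constructor
  · linarith [hT.le_add_const hf hg (fun y => sub_le_iff_le_add'.1 (abs_sub_le_iff.1 (h y)).1) x]
  · linarith [hT.le_add_const hg hf (fun y => sub_le_iff_le_add'.1 (abs_sub_le_iff.1 (h y)).2) x]

lemma le_add_mul_dist (hT : IsConvexExpectation T) (hf : IsBUC f) {ε C : ℝ}
    (hC : ∀ a b, f a ≤ f b + ε + C * dist a b) (x x' : Ed d) :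
    T f x ≤ T f x' + ε + C * dist x x' := by
  rw [add_assoc]
  refine hT.le_add hf hf fun y => ?_
  simpa only [dist_add_right, add_assoc] using hC (x + y) (x' + y)

lemma isBUC (hT : IsConvexExpectation T) (hf : IsBUC f) : IsBUC (T f) := by
  refine ⟨Metric.uniformContinuous_iff.2 fun ε hε => ?_, ?_⟩
  · obtain ⟨δ, hδ, hfδ⟩ := Metric.uniformContinuous_iff.1 hf.uniformContinuous (ε / 2) (half_pos hε)
    have hle {x x' : Ed d} (hx : dist x x' < δ) : T f x ≤ T f x' + ε / 2 := by
      refine hT.le_add hf hf fun y => ?_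
      have hy : dist (x + y) (x' + y) < δ := by rwa [dist_add_right]
      linarith [(abs_lt.1 (hfδ hy)).2]
    refine ⟨δ, hδ, fun x x' hx => ?_⟩
    rw [Real.dist_eq, abs_sub_lt_iff]
    constructor <;> linarith [hle hx, hle (dist_comm x x' ▸ hx)]
  · obtain ⟨M, hM⟩ := hf.exists_abs_le
    refine ⟨M, fun x => ?_⟩
    simpa only [hT.map_zero, sub_zero] using
      hT.abs_sub_le hf (.const 0) (K := M) (by simpa only [sub_zero] using hM) x

lemma isC0 (hT : IsConvexExpectation T) (hf : IsC0 f) : IsC0 (T f) :=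
  ⟨(hT.isBUC hf.isBUC).uniformContinuous.continuous, hT.tendsto_cocompact hf⟩

lemma neg_map_neg_le (hT : IsConvexExpectation T) (hf : IsBUC f) (x : Ed d) :
    -T (fun y => -f y) x ≤ T f x := by
  have hconv := hT.convex hf hf.neg one_half_pos.le one_half_lt_one.le x
  have hzero : (fun y => 1 / 2 * f y + (1 - 1 / 2) * -f y) = fun _ => 0 := by
    ext y
    ring
  rw [hzero, hT.map_zero] at hconv
  linarith

protected lemma id : IsConvexExpectation (id : (Ed d → ℝ) → Ed d → ℝ) where
  le_add _ _ x x' K h := by simpa only [id_eq, add_zero] using h 0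
  map_zero _ := rfl
  convex _ _ _ _ _ _ := le_rfl
  tendsto_cocompact hf := hf.2

lemma comp (hT : IsConvexExpectation T) (hU : IsConvexExpectation U) :
    IsConvexExpectation (T ∘ U) where
  le_add hf hg x x' K h := hT.le_add (hU.isBUC hf) (hU.isBUC hg) fun y =>
    hU.le_add hf hg fun z => by simpa only [add_assoc] using h (y + z)
  map_zero x := by
    rw [Function.comp_apply, show U (fun _ => 0) = fun _ => 0 from funext hU.map_zero, hT.map_zero]
  convex {f g} hf hg l hl₀ hl₁ x :=
    calc T (U fun y => l * f y + (1 - l) * g y) x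
        ≤ T (fun y => l * U f y + (1 - l) * U g y) x :=
          hT.mono (hU.isBUC (hf.convex_combination hg l))
            ((hU.isBUC hf).convex_combination (hU.isBUC hg) l) (hU.convex hf hg hl₀ hl₁) x
      _ ≤ l * T (U f) x + (1 - l) * T (U g) x :=
          hT.convex (hU.isBUC hf) (hU.isBUC hg) hl₀ hl₁ x
  tendsto_cocompact hf := hT.tendsto_cocompact (hU.isC0 hf)

lemma iterate (hT : IsConvexExpectation T) : ∀ k : ℕ, IsConvexExpectation T^[k]
  | 0 => .id
  | k + 1 => (hT.iterate k).comp hT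

lemma iterate_two_mul_le_iterate (hT : IsConvexExpectation T) (hU : IsConvexExpectation U)
    (hTU : ∀ {f}, IsBUC f → ∀ x, T (T f) x ≤ U f x) (hf : IsBUC f) (k : ℕ) (x : Ed d) :
    T^[2 * k] f x ≤ U^[k] f x := by
  induction k generalizing f with
  | zero => exact le_rfl
  | succ k ih =>
    calc T^[2 * k] (T (T f)) x ≤ T^[2 * k] (U f) x :=
          (hT.iterate _).mono (hT.isBUC (hT.isBUC hf)) (hU.isBUC hf) (hTU hf) x
      _ ≤ U^[k] (U f) x := ih (hU.isBUC hf)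

section DecreasingLimit

variable {F : ℕ → (Ed d → ℝ) → Ed d → ℝ}

lemma neg_map_neg_le_of_antitone (hF : ∀ n, IsConvexExpectation (F n))
    (hanti : ∀ {f}, IsBUC f → ∀ x, Antitone fun n => F n f x) (hf : IsBUC f) (n : ℕ) (x : Ed d) :
    -F 0 (fun y => -f y) x ≤ F n f x :=
  (neg_le_neg (hanti hf.neg x n.zero_le)).trans ((hF n).neg_map_neg_le hf x)

lemma tendsto_iInf (hF : ∀ n, IsConvexExpectation (F n))
    (hanti : ∀ {f}, IsBUC f → ∀ x, Antitone fun n => F n f x) (hf : IsBUC f) (x : Ed d) :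
    Tendsto (fun n => F n f x) atTop (𝓝 (⨅ n, F n f x)) :=
  tendsto_atTop_ciInf (hanti hf x)
    ⟨_, forall_mem_range.2 fun n => neg_map_neg_le_of_antitone hF hanti hf n x⟩

protected lemma iInf (hF : ∀ n, IsConvexExpectation (F n))
    (hanti : ∀ {f}, IsBUC f → ∀ x, Antitone fun n => F n f x) :
    IsConvexExpectation fun f x => ⨅ n, F n f x where
  le_add hf hg x x' K h :=
    le_of_tendsto_of_tendsto' (tendsto_iInf hF hanti hf x)
      ((tendsto_iInf hF hanti hg x').add_const K) fun n => (hF n).le_add hf hg h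
  map_zero x := by simp only [(hF _).map_zero, ciInf_const]
  convex hf hg l hl₀ hl₁ x :=
    le_of_tendsto_of_tendsto' (tendsto_iInf hF hanti (hf.convex_combination hg l) x)
      (((tendsto_iInf hF hanti hf x).const_mul l).add
        ((tendsto_iInf hF hanti hg x).const_mul (1 - l))) fun n => (hF n).convex hf hg hl₀ hl₁ x
  tendsto_cocompact {f} hf := by
    have hlower : Tendsto (fun x => -F 0 (fun y => -f y) x) (cocompact (Ed d)) (𝓝 0) := by
      simpa only [neg_zero] using ((hF 0).tendsto_cocompact hf.neg).neg
    refine tendsto_of_tendsto_of_tendsto_of_le_of_le hlower ((hF 0).tendsto_cocompact hf)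
      (fun x => le_ciInf fun n => neg_map_neg_le_of_antitone hF hanti hf.isBUC n x) fun x => ?_
    exact (hanti hf.isBUC x).le_of_tendsto (tendsto_iInf hF hanti hf.isBUC x) 0

lemma tendstoUniformly_iInf (hF : ∀ n, IsConvexExpectation (F n))
    (hanti : ∀ {f}, IsBUC f → ∀ x, Antitone fun n => F n f x) (hf : IsC0 f) :
    TendstoUniformly (fun n x => F n f x) (fun x => ⨅ n, F n f x) atTop :=
  have hlim := (IsConvexExpectation.iInf hF hanti).isC0 hf
  tendstoUniformly_of_antitone_of_tendsto_cocompact (fun n => ((hF n).isC0 hf).1) hlim.1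
    (hanti hf.isBUC) (tendsto_iInf hF hanti hf.isBUC) ((hF 0).isC0 hf).2 hlim.2

end DecreasingLimit

end IsConvexExpectation

/-- The `n`-th dyadic Euler-type product `S(2⁻ⁿ)^{∘ k} ∘ S(t - k·2⁻ⁿ)`, `k = ⌊2ⁿ t⌋`, of a family of
operators `S`; `SiterN` is the case of the one-step operators `Sop`. -/
def dyadicIterate {A : Type*} (S : ℝ → A → A) (n : ℕ) (t : ℝ) (a : A) : A :=
  (S ((2 : ℝ) ^ n)⁻¹)^[⌊(2 : ℝ) ^ n * t⌋₊]
    (S (t - ⌊(2 : ℝ) ^ n * t⌋₊ * ((2 : ℝ) ^ n)⁻¹) a)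

lemma dyadic_remainder_nonneg {t : ℝ} (ht : 0 ≤ t) (n : ℕ) :
    0 ≤ t - ⌊(2 : ℝ) ^ n * t⌋₊ * ((2 : ℝ) ^ n)⁻¹ := by
  have hfloor : (⌊(2 : ℝ) ^ n * t⌋₊ : ℝ) ≤ 2 ^ n * t := Nat.floor_le (by positivity)
  rw [sub_nonneg, mul_inv_le_iff₀ (by positivity)]
  linarith

lemma dyadic_floor_succ (n : ℕ) (t : ℝ) :
    ⌊(2 : ℝ) ^ (n + 1) * t⌋₊ = 2 * ⌊(2 : ℝ) ^ n * t⌋₊ ∨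
      ⌊(2 : ℝ) ^ (n + 1) * t⌋₊ = 2 * ⌊(2 : ℝ) ^ n * t⌋₊ + 1 := by
  have hhalf : ⌊(2 : ℝ) ^ n * t⌋₊ = ⌊(2 : ℝ) ^ (n + 1) * t⌋₊ / 2 := by
    rw [← Nat.floor_div_natCast]
    congr 1
    push_cast
    ring
  lia

section Dyadic

variable {d : ℕ} {S : ℝ → (Ed d → ℝ) → Ed d → ℝ} {t : ℝ}

lemma isConvexExpectation_dyadicIterate (hS : ∀ t, 0 ≤ t → IsConvexExpectation (S t))
    (ht : 0 ≤ t) (n : ℕ) : IsConvexExpectation (dyadicIterate S n t) :=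
  ((hS _ (by positivity)).iterate _).comp (hS _ (dyadic_remainder_nonneg ht n))

lemma antitone_dyadicIterate (hS : ∀ t, 0 ≤ t → IsConvexExpectation (S t))
    (hsub : ∀ {s t f}, 0 ≤ s → 0 ≤ t → IsBUC f → ∀ x, S s (S t f) x ≤ S (s + t) f x)
    (ht : 0 ≤ t) {f : Ed d → ℝ} (hf : IsBUC f) (x : Ed d) :
    Antitone fun n => dyadicIterate S n t f x := by
  refine antitone_nat_of_succ_le fun n => ?_
  have hrem := dyadic_remainder_nonneg ht (n + 1)
  have hh : ((2 : ℝ) ^ n)⁻¹ = ((2 : ℝ) ^ (n + 1))⁻¹ + ((2 : ℝ) ^ (n + 1))⁻¹ := by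
    rw [pow_succ, mul_inv]
    ring
  have hh₀ : 0 ≤ ((2 : ℝ) ^ (n + 1))⁻¹ := by positivity
  have hfloor := dyadic_floor_succ n t
  unfold dyadicIterate
  rw [hh]
  generalize ((2 : ℝ) ^ (n + 1))⁻¹ = h at *
  generalize ⌊(2 : ℝ) ^ n * t⌋₊ = k at *
  generalize ⌊(2 : ℝ) ^ (n + 1) * t⌋₊ = k' at *
  have hT := hS h hh₀
  have hU := hS (h + h) (by positivity)
  have hdouble {g : Ed d → ℝ} (hg : IsBUC g) : (S h)^[2 * k] g x ≤ (S (h + h))^[k] g x :=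
    hT.iterate_two_mul_le_iterate hU (hsub hh₀ hh₀) hg k x
  rcases hfloor with rfl | rfl
  · rw [show t - k * (h + h) = t - (2 * k : ℕ) * h by push_cast; ring]
    exact hdouble ((hS _ hrem).isBUC hf)
  · set r := t - (2 * k + 1 : ℕ) * h with hr
    rw [show t - k * (h + h) = h + r by rw [hr]; push_cast; ring, Function.iterate_succ_apply]
    have hsum := (hS (h + r) (by positivity)).isBUC hf
    exact ((hT.iterate (2 * k)).mono (hT.isBUC ((hS r hrem).isBUC hf)) hsum
      (hsub hh₀ hrem hf) x).trans (hdouble hsum)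

end Dyadic

/-! ### Penalty functions -/

section Penalty

variable {p : ℝ} {φ : ℝ≥0 → ℝ≥0∞} {s t : ℝ}

lemma phit_of_pos (ht : 0 < t) (r : ℝ≥0) :
    phit φ t r = (t.toNNReal : ℝ≥0∞) * φ (r / t.toNNReal) :=
  if_pos ht

lemma phit_of_nonpos (ht : t ≤ 0) (r : ℝ≥0) : phit φ t r = if r = 0 then 0 else ∞ :=
  if_neg ht.not_gt

lemma phit_zero (hφ : IsPenalty p φ) (t : ℝ) : phit φ t 0 = 0 := by
  rcases lt_or_ge 0 t with ht | ht
  · rw [phit_of_pos ht, zero_div, hφ.map_zero, mul_zero]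
  · rw [phit_of_nonpos ht, if_pos rfl]

lemma phit_mono (hφ : IsPenalty p φ) (t : ℝ) : Monotone (phit φ t) := by
  intro a b hab
  rcases lt_or_ge 0 t with ht | ht
  · rw [phit_of_pos ht, phit_of_pos ht]
    exact mul_le_mul_right (hφ.mono (by gcongr)) _
  · rcases eq_or_ne b 0 with rfl | hb
    · rw [le_zero_iff.1 hab]
    · rw [phit_of_nonpos ht b, if_neg hb]
      exact le_top

lemma lowerSemicontinuous_phit (hφ : IsPenalty p φ) (t : ℝ) : LowerSemicontinuous (phit φ t) := by
  rcases lt_or_ge 0 t with ht | ht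
  · have hscaled : LowerSemicontinuous fun r : ℝ≥0 => φ (r / t.toNNReal) :=
      hφ.lsc.comp (by fun_prop)
    rw [show phit φ t = _ from funext (phit_of_pos ht)]
    exact (ENNReal.continuous_const_mul ENNReal.coe_ne_top).comp_lowerSemicontinuous hscaled
      fun _ _ h => mul_le_mul_right h _
  · have hindicator : phit φ t = indicator {0}ᶜ fun _ => ∞ := by
      ext r
      rw [phit_of_nonpos ht]
      by_cases hr : r = 0 <;> simp [hr]
    rw [hindicator]
    exact isOpen_compl_singleton.lowerSemicontinuous_indicator zero_le

lemma phit_add_le (hφ : IsPenalty p φ) (hs : 0 ≤ s) (ht : 0 ≤ t) (a b : ℝ≥0) :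
    phit φ (s + t) (a + b) ≤ phit φ s a + phit φ t b := by
  rcases hs.eq_or_lt with rfl | hs
  · rcases eq_or_ne a 0 with rfl | ha
    · simp only [zero_add, phit_zero hφ, le_refl]
    · simp [phit_of_nonpos le_rfl, ha]
  rcases ht.eq_or_lt with rfl | ht
  · rcases eq_or_ne b 0 with rfl | hb
    · simp only [add_zero, phit_zero hφ, le_refl]
    · simp [phit_of_nonpos le_rfl, hb]
  rw [phit_of_pos hs, phit_of_pos ht, phit_of_pos (add_pos hs ht), Real.toNNReal_add hs.le ht.le]
  have hS : s.toNNReal ≠ 0 := (Real.toNNReal_pos.2 hs).ne'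
  have hT : t.toNNReal ≠ 0 := (Real.toNNReal_pos.2 ht).ne'
  generalize s.toNNReal = S at *
  generalize t.toNNReal = T at *
  have hST : S + T ≠ 0 := by simp [hS]
  have hmean : (a + b) / (S + T) = S / (S + T) * (a / S) + T / (S + T) * (b / T) := by field_simp
  calc ((S + T : ℝ≥0) : ℝ≥0∞) * φ ((a + b) / (S + T))
      ≤ ((S + T : ℝ≥0) : ℝ≥0∞) * (((S / (S + T) : ℝ≥0) : ℝ≥0∞) * φ (a / S)
          + ((T / (S + T) : ℝ≥0) : ℝ≥0∞) * φ (b / T)) := by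
        rw [hmean]
        gcongr
        exact hφ.convex _ _ _ _ (by field_simp)
    _ = S * φ (a / S) + T * φ (b / T) := by
        rw [mul_add, ← mul_assoc, ← mul_assoc, ← ENNReal.coe_mul, ← ENNReal.coe_mul,
          mul_div_cancel₀ _ hST, mul_div_cancel₀ _ hST]

lemma IsPenalty.exists_mul_le_add (hφ : IsPenalty p φ) :
    ∃ a b : ℝ≥0, 0 < a ∧ ∀ r : ℝ≥0, (a * r : ℝ≥0∞) ≤ φ r + b := by
  obtain ⟨r₀, hr₀⟩ : ∃ r, φ r ≠ 0 := by
    by_contra! hzero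
    obtain ⟨a, b, hab⟩ := hφ.not_const
    exact hab (by rw [hzero, hzero])
  obtain ⟨m, hm, hmr₀⟩ := ENNReal.lt_iff_exists_nnreal_btwn.1 (pos_iff_ne_zero.2 hr₀)
  have hr₀pos : 0 < r₀ := pos_iff_ne_zero.2 fun h => hr₀ (h ▸ hφ.map_zero)
  refine ⟨m / r₀, m, div_pos (ENNReal.coe_pos.1 hm) hr₀pos, fun r => ?_⟩
  rcases le_total r r₀ with hr | hr
  · have : m / r₀ * r ≤ m := by
      rw [div_mul_eq_mul_div]
      exact div_le_of_le_mul₀ zero_le zero_le (by gcongr)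
    exact le_add_left (by exact_mod_cast this)
  · have hrpos : 0 < r := hr₀pos.trans_le hr
    have hconv := hφ.convex r 0 (r₀ / r) (1 - r₀ / r)
      (add_tsub_cancel_of_le (div_le_one_of_le₀ hr zero_le))
    rw [hφ.map_zero, mul_zero, mul_zero, add_zero, add_zero, div_mul_cancel₀ _ hrpos.ne'] at hconv
    calc ((m / r₀ : ℝ≥0) * r : ℝ≥0∞) = ((r / r₀ : ℝ≥0) : ℝ≥0∞) * m := by
          norm_cast
          rw [div_mul_eq_mul_div, div_mul_eq_mul_div, mul_comm]
      _ ≤ ((r / r₀ : ℝ≥0) : ℝ≥0∞) * (((r₀ / r : ℝ≥0) : ℝ≥0∞) * φ r) := by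
          gcongr
          exact hmr₀.le.trans hconv
      _ = φ r := by
          rw [← mul_assoc, ← ENNReal.coe_mul, div_mul_div_cancel₀ hr₀pos.ne', div_self hrpos.ne',
            ENNReal.coe_one, one_mul]
      _ ≤ φ r + m := le_self_add

lemma exists_mul_le_phit_add (hφ : IsPenalty p φ) (t : ℝ) :
    ∃ a b : ℝ≥0, 0 < a ∧ ∀ r : ℝ≥0, (a * r : ℝ≥0∞) ≤ phit φ t r + b := by
  rcases lt_or_ge 0 t with ht | ht
  · obtain ⟨a, b, ha, hab⟩ := hφ.exists_mul_le_add
    refine ⟨a, t.toNNReal * b, ha, fun r => ?_⟩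
    have hT : t.toNNReal ≠ 0 := (Real.toNNReal_pos.2 ht).ne'
    calc (a * r : ℝ≥0∞) = t.toNNReal * (a * (r / t.toNNReal : ℝ≥0)) := by
          norm_cast
          field_simp
      _ ≤ t.toNNReal * (φ (r / t.toNNReal) + b) := by gcongr; exact hab _
      _ = phit φ t r + (t.toNNReal * b : ℝ≥0) := by
          rw [phit_of_pos ht, mul_add, ENNReal.coe_mul]
  · refine ⟨1, 0, one_pos, fun r => ?_⟩
    rcases eq_or_ne r 0 with rfl | hr
    · simp
    · simp [phit_of_nonpos ht, hr]

lemma phit_rpow_convex (hp : 0 < p) (hφ : IsPenalty p φ) (t : ℝ) {l m : ℝ≥0} (hlm : l + m = 1)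
    (a b : ℝ≥0) :
    phit φ t ((l * a + m * b) ^ (1 / p)) ≤
      l * phit φ t (a ^ (1 / p)) + m * phit φ t (b ^ (1 / p)) := by
  rcases lt_or_ge 0 t with ht | ht
  · simp only [phit_of_pos ht]
    generalize t.toNNReal = T
    have hscale (r : ℝ≥0) : r ^ (1 / p) / T = (r / T ^ p) ^ (1 / p) := by
      rw [NNReal.div_rpow, ← NNReal.rpow_mul, mul_one_div_cancel hp.ne', NNReal.rpow_one]
    rw [hscale, hscale, hscale, add_div, mul_div_assoc, mul_div_assoc, mul_left_comm (l : ℝ≥0∞),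
      mul_left_comm (m : ℝ≥0∞), ← mul_add]
    gcongr
    exact hφ.convex_rpow _ _ _ _ hlm
  · simp only [phit_of_nonpos ht, NNReal.rpow_eq_zero_iff, one_div, ne_eq, inv_eq_zero, hp.ne',
      not_false_eq_true, and_true]
    split_ifs <;> by_cases hl : l = 0 <;> simp_all [ENNReal.mul_top]

/-- The epigraph of the convex function `r ↦ φ_t(r^{1/p})`, as a subset of the plane. -/
def penaltyEpigraph (p : ℝ) (φ : ℝ≥0 → ℝ≥0∞) (t : ℝ) : Set (ℝ × ℝ) :=
  {v | 0 ≤ v.1 ∧ 0 ≤ v.2 ∧ phit φ t (v.1.toNNReal ^ (1 / p)) ≤ ENNReal.ofReal v.2}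

lemma isClosed_penaltyEpigraph (hp : 0 < p) (hφ : IsPenalty p φ) (t : ℝ) :
    IsClosed (penaltyEpigraph p φ t) := by
  have hcont : Continuous fun v : ℝ × ℝ => (v.1.toNNReal ^ (1 / p), ENNReal.ofReal v.2) :=
    ((NNReal.continuous_rpow_const (by positivity)).comp
      (continuous_real_toNNReal.comp continuous_fst)).prodMk
      (ENNReal.continuous_ofReal.comp continuous_snd)
  exact (isClosed_le continuous_const continuous_fst).inter
    ((isClosed_le continuous_const continuous_snd).inter
      ((lowerSemicontinuous_phit hφ t).isClosed_epigraph.preimage hcont))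

lemma convex_penaltyEpigraph (hp : 0 < p) (hφ : IsPenalty p φ) (t : ℝ) :
    Convex ℝ (penaltyEpigraph p φ t) := by
  rintro ⟨a, c⟩ ⟨ha, hc, hac⟩ ⟨b, e⟩ ⟨hb, he, hbe⟩ l m hl hm hlm
  dsimp only at ha hc hac hb he hbe
  refine ⟨add_nonneg (mul_nonneg hl ha) (mul_nonneg hm hb),
    add_nonneg (mul_nonneg hl hc) (mul_nonneg hm he), ?_⟩
  lift a to ℝ≥0 using ha
  lift b to ℝ≥0 using hb
  lift c to ℝ≥0 using hc
  lift e to ℝ≥0 using he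
  lift l to ℝ≥0 using hl
  lift m to ℝ≥0 using hm
  simp only [Prod.smul_mk, Prod.mk_add_mk, smul_eq_mul]
  norm_cast at hlm ⊢
  simp only [Real.toNNReal_coe, ENNReal.ofReal_coe_nnreal] at hac hbe ⊢
  calc phit φ t ((l * a + m * b) ^ (1 / p))
      ≤ l * phit φ t (a ^ (1 / p)) + m * phit φ t (b ^ (1 / p)) := phit_rpow_convex hp hφ t hlm a b
    _ ≤ l * c + m * e := by gcongr
    _ = (l * c + m * e : ℝ≥0) := by push_cast; rfl

lemma integral_mem_penaltyEpigraph (hp : 0 < p) (hφ : IsPenalty p φ) (t : ℝ) {Ω : Type*}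
    [MeasurableSpace Ω] {γ : Measure Ω} [IsProbabilityMeasure γ] {u v : Ω → ℝ}
    (hu : Integrable u γ) (hv : Integrable v γ)
    (huv : ∀ ω, (u ω, v ω) ∈ penaltyEpigraph p φ t) :
    (∫ ω, u ω ∂γ, ∫ ω, v ω ∂γ) ∈ penaltyEpigraph p φ t := by
  rw [← integral_pair hu hv]
  exact (convex_penaltyEpigraph hp hφ t).integral_mem (isClosed_penaltyEpigraph hp hφ t)
    (ae_of_all _ huv) (hu.prodMk hv)

end Penalty

/-! ### Transport plans and the Wasserstein distance -/

section Integrals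

variable {Ω : Type*} [MeasurableSpace Ω] {γ : Measure Ω} [IsProbabilityMeasure γ]

lemma integral_norm_le_toReal_eLpNorm {E : Type*} [NormedAddCommGroup E] {h : Ω → E} {q : ℝ≥0∞}
    (hq : 1 ≤ q) (hh : MemLp h q γ) : ∫ ω, ‖h ω‖ ∂γ ≤ (eLpNorm h q γ).toReal := by
  rw [integral_norm_eq_lintegral_enorm hh.1, ← eLpNorm_one_eq_lintegral_enorm]
  exact ENNReal.toReal_mono hh.2.ne (eLpNorm_le_eLpNorm_of_exponent_le hq hh.1)

lemma IsBUC.integral_comp_le_add_mul_integral_dist {X : Type*} [PseudoMetricSpace X]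
    [MeasurableSpace X] [OpensMeasurableSpace X] {f : X → ℝ} (hf : IsBUC f) {ε C : ℝ}
    (hC : ∀ a b, f a ≤ f b + ε + C * dist a b) {u v : Ω → X} (hu : Measurable u)
    (hv : Measurable v) (huv : Integrable (fun ω => dist (u ω) (v ω)) γ) :
    ∫ ω, f (u ω) ∂γ ≤ ∫ ω, f (v ω) ∂γ + ε + C * ∫ ω, dist (u ω) (v ω) ∂γ := by
  have hfv : Integrable (fun ω => f (v ω)) γ := hf.integrable_comp hv
  have hfvε : Integrable (fun ω => f (v ω) + ε) γ := hfv.add (integrable_const ε)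
  calc ∫ ω, f (u ω) ∂γ ≤ ∫ ω, f (v ω) + ε + C * dist (u ω) (v ω) ∂γ :=
        integral_mono (hf.integrable_comp hu) (hfvε.add (huv.const_mul C)) fun ω => hC _ _
    _ = ∫ ω, f (v ω) ∂γ + ε + C * ∫ ω, dist (u ω) (v ω) ∂γ := by
        rw [integral_add hfvε (huv.const_mul C), integral_add hfv (integrable_const ε),
          integral_const_mul, integral_const, probReal_univ, one_smul]

end Integrals

/-- The cost of a transport plan `γ`: the `L^p(γ)`-norm of the displacement `q ↦ q.2 - q.1`. -/
def transportCost {E : Type*} [NormedAddCommGroup E] [MeasurableSpace E] (p : ℝ)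
    (γ : Measure (E × E)) : ℝ≥0∞ :=
  eLpNorm (fun q : E × E => q.2 - q.1) (ENNReal.ofReal p) γ

lemma eLpNorm_ofReal_eq_lintegral {Ω E : Type*} [MeasurableSpace Ω] [NormedAddCommGroup E]
    {p : ℝ} (hp : 0 < p) (h : Ω → E) (γ : Measure Ω) :
    eLpNorm h (ENNReal.ofReal p) γ = (∫⁻ ω, (‖h ω‖₊ : ℝ≥0∞) ^ p ∂γ) ^ (1 / p) := by
  rw [eLpNorm_eq_lintegral_rpow_enorm_toReal (by simpa using hp) ENNReal.ofReal_ne_top,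
    ENNReal.toReal_ofReal hp.le]
  rfl

section Transport

variable {d : ℕ} {p : ℝ} {μ ν : Measure (Ed d)} {γ : Measure (Ed d × Ed d)}

lemma memPp_iff_memLp_id (hp : 0 < p) :
    MemPp p μ ↔ IsProbabilityMeasure μ ∧ MemLp id (ENNReal.ofReal p) μ := by
  refine and_congr_right fun _ => ?_
  rw [MemLp, and_iff_right aestronglyMeasurable_id, eLpNorm_ofReal_eq_lintegral hp,
    ENNReal.rpow_lt_top_iff_of_pos (by positivity)]
  rfl

lemma MemPp.memLp_id (hp : 0 < p) (hμ : MemPp p μ) : MemLp id (ENNReal.ofReal p) μ :=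
  ((memPp_iff_memLp_id hp).1 hμ).2

lemma MemPp.integrable_norm (hp : 1 ≤ p) (hμ : MemPp p μ) : Integrable (fun y => ‖y‖) μ :=
  have := hμ.1
  ((hμ.memLp_id (by positivity)).integrable (ENNReal.one_le_ofReal.2 hp)).norm

lemma Wp_nonneg : 0 ≤ Wp p μ ν := ENNReal.toReal_nonneg

lemma Wp_eq_toReal_iInf_transportCost (hp : 0 < p) (μ ν : Measure (Ed d)) :
    Wp p μ ν =
      (⨅ γ ∈ {γ : Measure (Ed d × Ed d) | IsCoupling γ μ ν}, transportCost p γ).toReal := by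
  simp only [transportCost, eLpNorm_ofReal_eq_lintegral hp]
  rfl

lemma memLp_sub_of_transportCost_ne_top (hγ : transportCost p γ ≠ ∞) :
    MemLp (fun q : Ed d × Ed d => q.2 - q.1) (ENNReal.ofReal p) γ :=
  ⟨(by fun_prop : Measurable fun q : Ed d × Ed d => q.2 - q.1).aestronglyMeasurable, hγ.lt_top⟩

lemma integrable_norm_sub_of_transportCost_ne_top [IsFiniteMeasure γ] (hp : 1 ≤ p)
    (hγ : transportCost p γ ≠ ∞) : Integrable (fun q : Ed d × Ed d => ‖q.2 - q.1‖) γ :=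
  ((memLp_sub_of_transportCost_ne_top hγ).integrable (ENNReal.one_le_ofReal.2 hp)).norm

lemma integral_norm_sub_le_toReal_transportCost [IsProbabilityMeasure γ] (hp : 1 ≤ p)
    (hγ : transportCost p γ ≠ ∞) : ∫ q, ‖q.2 - q.1‖ ∂γ ≤ (transportCost p γ).toReal :=
  integral_norm_le_toReal_eLpNorm (ENNReal.one_le_ofReal.2 hp)
    (memLp_sub_of_transportCost_ne_top hγ)

lemma MemPp.map_snd_of_transportCost_ne_top (hp : 0 < p) (hμ : MemPp p μ)
    (hγμ : γ.map Prod.fst = μ) (hγ : transportCost p γ ≠ ∞) : MemPp p (γ.map Prod.snd) := by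
  subst hγμ
  have := hμ.1
  have : IsProbabilityMeasure γ := Measure.isProbabilityMeasure_of_map Prod.fst
  rw [memPp_iff_memLp_id hp] at hμ ⊢
  refine ⟨Measure.isProbabilityMeasure_map measurable_snd.aemeasurable, ?_⟩
  rw [memLp_map_measure_iff aestronglyMeasurable_id measurable_snd.aemeasurable]
  have hfst : MemLp Prod.fst (ENNReal.ofReal p) γ :=
    (memLp_map_measure_iff aestronglyMeasurable_id measurable_fst.aemeasurable).1 hμ.2
  convert (memLp_sub_of_transportCost_ne_top hγ).add hfst using 1
  ext1 q
  exact (sub_add_cancel q.2 q.1).symm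

lemma MemPp.conv (hp : 1 ≤ p) (hμ : MemPp p μ) (hν : MemPp p ν) : MemPp p (μ.conv ν) := by
  have hp₀ : 0 < p := by positivity
  have := hμ.1
  have := hν.1
  refine (memPp_iff_memLp_id hp₀).2 ⟨inferInstance, ?_⟩
  rw [Measure.conv, memLp_map_measure_iff aestronglyMeasurable_id (by fun_prop)]
  exact ((hμ.memLp_id hp₀).comp_fst ν).add ((hν.memLp_id hp₀).comp_snd μ)

lemma transportCost_prod_ne_top (hp : 1 ≤ p) (hμ : MemPp p μ) (hν : MemPp p ν) :
    transportCost p (μ.prod ν) ≠ ∞ := by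
  have := hμ.1
  have := hν.1
  have hfst := (hμ.memLp_id (by positivity)).comp_fst ν
  have hsnd := (hν.memLp_id (by positivity)).comp_snd μ
  exact (hsnd.sub hfst).2.ne

lemma Wp_toNNReal_le_transportCost (hp : 0 < p) (hγ : IsCoupling γ μ ν)
    (hfin : transportCost p γ ≠ ∞) : (Wp p μ ν).toNNReal ≤ (transportCost p γ).toNNReal := by
  rw [Wp_eq_toReal_iInf_transportCost hp, ENNReal.toNNReal_toReal_eq]
  exact ENNReal.toNNReal_mono hfin (iInf₂_le γ hγ)

lemma Wp_self (hp : 0 < p) (μ : Measure (Ed d)) : Wp p μ μ = 0 := by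
  have hdiag : Measurable fun z : Ed d => (z, z) := by fun_prop
  have hcoupling : IsCoupling (μ.map fun z => (z, z)) μ μ := by
    constructor <;> rw [Measure.map_map (by fun_prop) hdiag] <;> exact Measure.map_id
  have hcost : transportCost p (μ.map fun z => (z, z)) = 0 := by
    rw [transportCost, eLpNorm_map_measure (by fun_prop) hdiag.aemeasurable]
    simp [Function.comp_def]
  refine le_antisymm (Real.toNNReal_eq_zero.1 (le_zero_iff.1 ?_)) Wp_nonneg
  simpa [hcost] using Wp_toNNReal_le_transportCost hp hcoupling (hcost ▸ ENNReal.zero_ne_top)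

lemma exists_isCoupling_transportCost_lt (hp : 1 ≤ p) (hμ : MemPp p μ) (hν : MemPp p ν) {δ : ℝ}
    (hδ : 0 < δ) : ∃ γ, IsCoupling γ μ ν ∧ transportCost p γ < ENNReal.ofReal (Wp p μ ν + δ) := by
  have := hμ.1
  have := hν.1
  have hprod : IsCoupling (μ.prod ν) μ ν := ⟨by simp, by simp⟩
  have hfin : (⨅ γ ∈ {γ : Measure (Ed d × Ed d) | IsCoupling γ μ ν}, transportCost p γ) ≠ ∞ :=
    ne_top_of_le_ne_top (transportCost_prod_ne_top hp hμ hν) (iInf₂_le (μ.prod ν) hprod)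
  have hlt : ⨅ γ ∈ {γ : Measure (Ed d × Ed d) | IsCoupling γ μ ν}, transportCost p γ
      < ENNReal.ofReal (Wp p μ ν + δ) := by
    rw [ENNReal.lt_ofReal_iff_toReal_lt hfin, ← Wp_eq_toReal_iInf_transportCost (by positivity)]
    linarith
  simpa only [iInf_lt_iff, mem_ofPred_eq, exists_prop] using hlt

lemma IsCoupling.integral_comp_fst (hγ : IsCoupling γ μ ν) {f : Ed d → ℝ} (hf : Measurable f) :
    ∫ q, f q.1 ∂γ = ∫ y, f y ∂μ := by
  rw [← hγ.1, integral_map measurable_fst.aemeasurable hf.aestronglyMeasurable]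

lemma IsCoupling.integral_comp_snd (hγ : IsCoupling γ μ ν) {f : Ed d → ℝ} (hf : Measurable f) :
    ∫ q, f q.2 ∂γ = ∫ y, f y ∂ν := by
  rw [← hγ.2, integral_map measurable_snd.aemeasurable hf.aestronglyMeasurable]

lemma IsCoupling.isProbabilityMeasure [IsProbabilityMeasure μ] (hγ : IsCoupling γ μ ν) :
    IsProbabilityMeasure γ := by
  have : IsProbabilityMeasure (γ.map Prod.fst) := by rwa [hγ.1]
  exact Measure.isProbabilityMeasure_of_map Prod.fst

lemma integral_norm_le_add_Wp (hp : 1 ≤ p) (hμ : MemPp p μ) (hν : MemPp p ν) :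
    ∫ y, ‖y‖ ∂ν ≤ ∫ y, ‖y‖ ∂μ + Wp p μ ν := by
  have := hμ.1
  refine le_of_forall_pos_le_add fun δ hδ => ?_
  obtain ⟨γ, hγ, hcost⟩ := exists_isCoupling_transportCost_lt hp hμ hν hδ
  have := hγ.isProbabilityMeasure
  have hfst : Integrable (fun q : Ed d × Ed d => ‖q.1‖) γ :=
    (hγ.1 ▸ hμ.integrable_norm hp).comp_measurable measurable_fst
  have hsnd : Integrable (fun q : Ed d × Ed d => ‖q.2‖) γ :=
    (hγ.2 ▸ hν.integrable_norm hp).comp_measurable measurable_snd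
  have hsub := integrable_norm_sub_of_transportCost_ne_top hp hcost.ne_top
  calc ∫ y, ‖y‖ ∂ν = ∫ q, ‖q.2‖ ∂γ := (hγ.integral_comp_snd measurable_norm).symm
    _ ≤ ∫ q, ‖q.1‖ + ‖q.2 - q.1‖ ∂γ :=
        integral_mono hsnd (hfst.add hsub) fun q => norm_le_norm_add_norm_sub' q.2 q.1
    _ = ∫ y, ‖y‖ ∂μ + ∫ q, ‖q.2 - q.1‖ ∂γ := by
        rw [integral_add hfst hsub, hγ.integral_comp_fst measurable_norm]
    _ ≤ ∫ y, ‖y‖ ∂μ + (Wp p μ ν + δ) := by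
        gcongr
        exact (integral_norm_sub_le_toReal_transportCost hp hcost.ne_top).trans
          (ENNReal.toReal_le_of_le_ofReal (add_nonneg Wp_nonneg hδ.le) hcost.le)
    _ = ∫ y, ‖y‖ ∂μ + Wp p μ ν + δ := by ring

end Transport

/-- The map contracting the displacement of a transport plan by the factor `θ`. -/
def contractDisplacement {E : Type*} [AddCommGroup E] [Module ℝ E] (θ : ℝ) (q : E × E) : E × E :=
  (q.1, q.1 + θ • (q.2 - q.1))

lemma dist_snd_contractDisplacement {E : Type*} [NormedAddCommGroup E] [NormedSpace ℝ E] {θ : ℝ}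
    (hθ : θ ≤ 1) (q : E × E) :
    dist q.2 (contractDisplacement θ q).2 = (1 - θ) * ‖q.2 - q.1‖ := by
  have hvec : q.2 - (q.1 + θ • (q.2 - q.1)) = (1 - θ) • (q.2 - q.1) := by module
  rw [contractDisplacement, dist_eq_norm, hvec, norm_smul,
    Real.norm_of_nonneg (sub_nonneg.2 hθ)]

section Contraction

variable {d : ℕ} {p : ℝ} {μ ν : Measure (Ed d)}

lemma measurable_contractDisplacement (θ : ℝ) :
    Measurable (contractDisplacement θ : Ed d × Ed d → Ed d × Ed d) := by
  unfold contractDisplacement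
  fun_prop

lemma transportCost_map_contractDisplacement (p θ : ℝ) (γ : Measure (Ed d × Ed d)) :
    transportCost p (γ.map (contractDisplacement θ)) = ‖θ‖ₑ * transportCost p γ := by
  rw [transportCost, eLpNorm_map_measure (by fun_prop)
    (measurable_contractDisplacement θ).aemeasurable, transportCost, ← eLpNorm_const_smul]
  congr 1
  ext1 q
  simp [contractDisplacement]

lemma IsBUC.integral_snd_le_integral_map_contractDisplacement {f : Ed d → ℝ} (hf : IsBUC f)
    {ε C θ : ℝ} (hC : ∀ a b, f a ≤ f b + ε + C * dist a b) (hθ : θ ≤ 1)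
    {γ : Measure (Ed d × Ed d)} [IsProbabilityMeasure γ]
    (hγ : Integrable (fun q : Ed d × Ed d => ‖q.2 - q.1‖) γ) :
    ∫ q, f q.2 ∂γ ≤
      ∫ q, f q.2 ∂(γ.map (contractDisplacement θ)) + ε + C * ((1 - θ) * ∫ q, ‖q.2 - q.1‖ ∂γ) := by
  have hT := measurable_contractDisplacement (d := d) θ
  have hfm : Measurable fun q : Ed d × Ed d => f q.2 :=
    hf.uniformContinuous.continuous.measurable.comp measurable_snd
  have hdist := hγ.const_mul (1 - θ)
  simp only [← dist_snd_contractDisplacement hθ] at hdist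
  have hle := hf.integral_comp_le_add_mul_integral_dist hC measurable_snd
    (measurable_snd.comp hT) hdist
  rw [integral_map hT.aemeasurable hfm.aestronglyMeasurable, ← integral_const_mul]
  simpa only [Function.comp_apply, dist_snd_contractDisplacement hθ] using hle

-- Since `φ_t` may jump to `∞` right after `Wp p μ ν`, a near-optimal coupling is not good enough:
-- contracting its displacement by `W / (W + δ)` brings the cost down to `Wp p μ ν`, and changes the
-- second marginal only slightly.
lemma exists_plan_transportCost_le_Wp (hp : 1 ≤ p) (hμ : MemPp p μ) (hν : MemPp p ν)
    {f : Ed d → ℝ} (hf : IsBUC f) {ε : ℝ} (hε : 0 < ε) :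
    ∃ γ : Measure (Ed d × Ed d), γ.map Prod.fst = μ ∧
      transportCost p γ ≤ ENNReal.ofReal (Wp p μ ν) ∧ ∫ y, f y ∂ν ≤ ∫ q, f q.2 ∂γ + ε := by
  have := hμ.1
  obtain ⟨C, hC, hfC⟩ := hf.exists_le_add_mul_dist (half_pos hε)
  obtain ⟨δ, hδ, hCδ⟩ : ∃ δ > 0, C * δ < ε / 2 := exists_pos_mul_lt (half_pos hε) C
  obtain ⟨γ, hγ, hcost⟩ := exists_isCoupling_transportCost_lt hp hμ hν hδ
  have := hγ.isProbabilityMeasure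
  have hW : 0 ≤ Wp p μ ν := Wp_nonneg
  generalize Wp p μ ν = W at *
  have hWδ : 0 < W + δ := by positivity
  have hT := measurable_contractDisplacement (d := d) (W / (W + δ))
  refine ⟨γ.map (contractDisplacement (W / (W + δ))), ?_, ?_, ?_⟩
  · rw [Measure.map_map measurable_fst hT]
    exact hγ.1
  · calc transportCost p (γ.map (contractDisplacement (W / (W + δ))))
        ≤ ENNReal.ofReal (W / (W + δ)) * ENNReal.ofReal (W + δ) := by
          rw [transportCost_map_contractDisplacement, Real.enorm_of_nonneg (by positivity)]
          gcongr
      _ = ENNReal.ofReal W := by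
          rw [← ENNReal.ofReal_mul (by positivity), div_mul_cancel₀ _ hWδ.ne']
  · have hnorm : ∫ q, ‖q.2 - q.1‖ ∂γ ≤ W + δ :=
      (integral_norm_sub_le_toReal_transportCost hp hcost.ne_top).trans
        (ENNReal.toReal_le_of_le_ofReal hWδ.le hcost.le)
    have hcontract := hf.integral_snd_le_integral_map_contractDisplacement hfC
      (div_le_one_of_le₀ (le_add_of_nonneg_right hδ.le) hWδ.le)
      (integrable_norm_sub_of_transportCost_ne_top hp hcost.ne_top)
    have hsmall : C * ((1 - W / (W + δ)) * ∫ q, ‖q.2 - q.1‖ ∂γ) ≤ C * δ := by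
      rw [one_sub_div hWδ.ne', add_sub_cancel_left]
      calc C * (δ / (W + δ) * ∫ q, ‖q.2 - q.1‖ ∂γ) ≤ C * (δ / (W + δ) * (W + δ)) := by gcongr
        _ = C * δ := by rw [div_mul_cancel₀ _ hWδ.ne']
    rw [hγ.integral_comp_snd hf.uniformContinuous.continuous.measurable] at hcontract
    linarith

end Contraction

/-! ### The one-step operator -/

section OneStepOperator

variable {d : ℕ} {p : ℝ} {φ : ℝ≥0 → ℝ≥0∞} {μ : Measure (Ed d)} {t : ℝ} {f g : Ed d → ℝ} {x : Ed d}

lemma IsBUC.integrable_comp_add_left {ν : Measure (Ed d)} [IsFiniteMeasure ν] (hf : IsBUC f)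
    (x : Ed d) : Integrable (fun y => f (x + y)) ν :=
  hf.integrable_comp (measurable_const_add x)

lemma le_Sop (hf : IsBUC f) {ν : Measure (Ed d)} (hν : MemPp p ν) {c : ℝ} (hc : 0 ≤ c)
    (hpen : phit φ t (Wp p μ ν).toNNReal ≤ ENNReal.ofReal c) :
    ∫ y, f (x + y) ∂ν - c ≤ Sop p φ μ t f x := by
  obtain ⟨M, hM⟩ := hf.exists_abs_le
  refine le_csSup ⟨M, ?_⟩ ⟨ν, hν, c, hc, hpen, rfl⟩
  rintro _ ⟨ν', hν', c', hc', -, rfl⟩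
  have := hν'.1
  have hle : ∫ y, f (x + y) ∂ν' ≤ ∫ _, M ∂ν' :=
    integral_mono (hf.integrable_comp_add_left x) (integrable_const M)
      fun y => (abs_le.1 (hM (x + y))).2
  rw [integral_const, probReal_univ, one_smul] at hle
  linarith

lemma phit_Wp_self (hp : 0 < p) (hφ : IsPenalty p φ) (μ : Measure (Ed d)) (t : ℝ) :
    phit φ t (Wp p μ μ).toNNReal ≤ ENNReal.ofReal 0 := by
  rw [Wp_self hp, Real.toNNReal_zero, phit_zero hφ, ENNReal.ofReal_zero]

lemma integral_le_Sop (hp : 0 < p) (hφ : IsPenalty p φ) (hμ : MemPp p μ) (hf : IsBUC f) :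
    ∫ y, f (x + y) ∂μ ≤ Sop p φ μ t f x := by
  simpa only [sub_zero] using le_Sop hf hμ le_rfl (phit_Wp_self hp hφ μ t)

lemma exists_lt_of_lt_Sop (hp : 0 < p) (hφ : IsPenalty p φ) (hμ : MemPp p μ) {r : ℝ}
    (hr : r < Sop p φ μ t f x) :
    ∃ ν c, MemPp p ν ∧ 0 ≤ c ∧ phit φ t (Wp p μ ν).toNNReal ≤ ENNReal.ofReal c ∧
      r < ∫ y, f (x + y) ∂ν - c := by
  obtain ⟨_, ⟨ν, hν, c, hc, hpen, rfl⟩, hlt⟩ := exists_lt_of_lt_csSup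
    (by exact ⟨_, μ, hμ, 0, le_rfl, phit_Wp_self hp hφ μ t, rfl⟩) hr
  exact ⟨ν, c, hν, hc, hpen, hlt⟩

lemma Sop_le (hp : 0 < p) (hφ : IsPenalty p φ) (hμ : MemPp p μ) {K : ℝ}
    (h : ∀ ν c, MemPp p ν → 0 ≤ c → phit φ t (Wp p μ ν).toNNReal ≤ ENNReal.ofReal c →
      ∫ y, f (x + y) ∂ν - c ≤ K) :
    Sop p φ μ t f x ≤ K := by
  by_contra! hK
  obtain ⟨ν, c, hν, hc, hpen, hlt⟩ := exists_lt_of_lt_Sop hp hφ hμ hK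
  exact hlt.not_ge (h ν c hν hc hpen)

lemma Sop_le_Sop_add (hp : 0 < p) (hφ : IsPenalty p φ) (hμ : MemPp p μ) (hf : IsBUC f)
    (hg : IsBUC g) {x' : Ed d} {K : ℝ} (h : ∀ y, f (x + y) ≤ g (x' + y) + K) :
    Sop p φ μ t f x ≤ Sop p φ μ t g x' + K := by
  refine Sop_le hp hφ hμ fun ν c hν hc hpen => ?_
  have := hν.1
  have hgint : Integrable (fun y => g (x' + y)) ν := hg.integrable_comp_add_left x'
  have hle : ∫ y, f (x + y) ∂ν ≤ ∫ y, g (x' + y) + K ∂ν :=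
    integral_mono (hf.integrable_comp_add_left x) (hgint.add (integrable_const K)) h
  rw [integral_add hgint (integrable_const K), integral_const, probReal_univ, one_smul] at hle
  linarith [le_Sop (x := x') hg hν hc hpen]

lemma Sop_zero (hp : 0 < p) (hφ : IsPenalty p φ) (hμ : MemPp p μ) (t : ℝ) (x : Ed d) :
    Sop p φ μ t (fun _ => 0) x = 0 := by
  refine le_antisymm (Sop_le hp hφ hμ fun ν c _ hc _ => by simpa using hc) ?_
  simpa using integral_le_Sop (f := fun _ => (0 : ℝ)) (x := x) (t := t) hp hφ hμ (.const 0)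

lemma Sop_convex (hp : 0 < p) (hφ : IsPenalty p φ) (hμ : MemPp p μ) (hf : IsBUC f) (hg : IsBUC g)
    {l : ℝ} (hl₀ : 0 ≤ l) (hl₁ : l ≤ 1) :
    Sop p φ μ t (fun y => l * f y + (1 - l) * g y) x ≤
      l * Sop p φ μ t f x + (1 - l) * Sop p φ μ t g x := by
  refine Sop_le hp hφ hμ fun ν c hν hc hpen => ?_
  have := hν.1
  rw [integral_add ((hf.integrable_comp_add_left x).const_mul l)
    ((hg.integrable_comp_add_left x).const_mul (1 - l)), integral_const_mul, integral_const_mul]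
  have hfle := mul_le_mul_of_nonneg_left (le_Sop (x := x) hf hν hc hpen) hl₀
  have hgle := mul_le_mul_of_nonneg_left (le_Sop (x := x) hg hν hc hpen) (sub_nonneg.2 hl₁)
  linarith

lemma abs_integral_comp_add_left_le (hp : 1 ≤ p) (hμ : MemPp p μ) (hf : IsBUC f) {ε η : ℝ}
    (hfx : ∀ y, |f (x + y)| ≤ ε + η * ‖y‖) :
    |∫ y, f (x + y) ∂μ| ≤ ε + η * ∫ y, ‖y‖ ∂μ := by
  have := hμ.1
  have hnorm := (hμ.integrable_norm hp).const_mul η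
  calc |∫ y, f (x + y) ∂μ| ≤ ∫ y, |f (x + y)| ∂μ := abs_integral_le_integral_abs
    _ ≤ ∫ y, ε + η * ‖y‖ ∂μ :=
        integral_mono (hf.integrable_comp_add_left x).abs ((integrable_const ε).add hnorm) hfx
    _ = ε + η * ∫ y, ‖y‖ ∂μ := by
        rw [integral_add (integrable_const ε) hnorm, integral_const_mul, integral_const,
          probReal_univ, one_smul]

-- The growth bound `a * r ≤ φ_t(r) + b` of the penalty pays for transporting mass from far away.
lemma abs_Sop_le_of_forall_abs_le (hp : 1 ≤ p) (hφ : IsPenalty p φ) (hμ : MemPp p μ)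
    (hf : IsBUC f) {a b : ℝ≥0} (hab : ∀ r : ℝ≥0, (a * r : ℝ≥0∞) ≤ phit φ t r + b) {ε l : ℝ}
    (hl₀ : 0 ≤ l) (hl₁ : l ≤ 1) (hfx : ∀ y, |f (x + y)| ≤ ε + l * a * ‖y‖) :
    |Sop p φ μ t f x| ≤ ε + l * (a * ∫ y, ‖y‖ ∂μ + b) := by
  rw [abs_le]
  constructor
  · have hlower := integral_le_Sop (x := x) (t := t) (by positivity) hφ hμ hf
    have hlb : 0 ≤ l * b := by positivity
    linarith [(abs_le.1 (abs_integral_comp_add_left_le hp hμ hf hfx)).1]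
  · refine Sop_le (by positivity) hφ hμ fun ν c hν hc hpen => ?_
    have hgrowth : a * Wp p μ ν ≤ c + b := by
      have h := (hab _).trans (add_le_add_left hpen b)
      rw [← ENNReal.ofReal_coe_nnreal (p := b), ← ENNReal.ofReal_add hc b.coe_nonneg] at h
      have h' := ENNReal.toReal_le_of_le_ofReal (add_nonneg hc b.coe_nonneg) h
      simpa [Real.coe_toNNReal _ Wp_nonneg] using h'
    have hmoment : l * a * ∫ y, ‖y‖ ∂ν ≤ l * a * (∫ y, ‖y‖ ∂μ + Wp p μ ν) := by
      gcongr
      exact integral_norm_le_add_Wp hp hμ hν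
    have hlW := mul_le_mul_of_nonneg_left hgrowth hl₀
    have hlc := mul_le_of_le_one_left hc hl₁
    linarith [(abs_le.1 (abs_integral_comp_add_left_le hp hν hf hfx)).2]

lemma tendsto_Sop_cocompact (hp : 1 ≤ p) (hφ : IsPenalty p φ) (hμ : MemPp p μ) (hf : IsC0 f) :
    Tendsto (Sop p φ μ t f) (cocompact (Ed d)) (𝓝 0) := by
  obtain ⟨a, b, ha, hab⟩ := exists_mul_le_phit_add hφ t
  refine Metric.tendsto_nhds.2 fun ε hε => ?_
  obtain ⟨k, hk, hkε⟩ := exists_pos_mul_lt (half_pos hε) (a * ∫ y, ‖y‖ ∂μ + b)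
  set l := min k 1
  have hl : 0 < l := lt_min hk one_pos
  have hlε : l * (a * ∫ y, ‖y‖ ∂μ + b) < ε / 2 := by
    refine lt_of_le_of_lt ?_ hkε
    rw [mul_comm]
    gcongr
    exact min_le_left k 1
  filter_upwards [hf.eventually_abs_add_le (half_pos hε) (mul_pos hl (NNReal.coe_pos.2 ha))]
    with x hx
  rw [Real.dist_eq, sub_zero]
  linarith [abs_Sop_le_of_forall_abs_le hp hφ hμ hf.isBUC hab hl.le (min_le_right k 1) hx]

end OneStepOperator

/-! ### Subadditivity in time of the one-step operator -/

lemma isConvexExpectation_Sop {d : ℕ} {p : ℝ} {φ : ℝ≥0 → ℝ≥0∞} {μ : Measure (Ed d)} (hp : 1 ≤ p)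
    (hφ : IsPenalty p φ) (hμ : MemPp p μ) (t : ℝ) : IsConvexExpectation (Sop p φ μ t) where
  le_add hf hg _ _ _ h := Sop_le_Sop_add (by positivity) hφ hμ hf hg h
  map_zero x := Sop_zero (by positivity) hφ hμ t x
  convex hf hg _ hl₀ hl₁ _ := Sop_convex (by positivity) hφ hμ hf hg hl₀ hl₁
  tendsto_cocompact hf := tendsto_Sop_cocompact hp hφ hμ hf

/-- A transport plan `γ` starting from `μ` of finite cost, whose penalty at time `t` is at most `c`.
The supremum defining `Sop` can be taken over such pairs `(γ, c)` instead of over target measures,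
and plans, unlike target measures, can be glued together. -/
structure IsAdmissiblePlan {d : ℕ} (p : ℝ) (φ : ℝ≥0 → ℝ≥0∞) (μ : Measure (Ed d)) (t : ℝ)
    (γ : Measure (Ed d × Ed d)) (c : ℝ) : Prop where
  map_fst : γ.map Prod.fst = μ
  cost_ne_top : transportCost p γ ≠ ∞
  nonneg : 0 ≤ c
  penalty_le : phit φ t (transportCost p γ).toNNReal ≤ ENNReal.ofReal c

section AdmissiblePlans

variable {d : ℕ} {p : ℝ} {φ : ℝ≥0 → ℝ≥0∞} {μ : Measure (Ed d)} {t : ℝ} {f : Ed d → ℝ} {x : Ed d}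
  {γ : Measure (Ed d × Ed d)} {c : ℝ}

lemma IsAdmissiblePlan.isProbabilityMeasure [IsProbabilityMeasure μ]
    (h : IsAdmissiblePlan p φ μ t γ c) : IsProbabilityMeasure γ :=
  IsCoupling.isProbabilityMeasure ⟨h.map_fst, rfl⟩

lemma IsAdmissiblePlan.integral_sub_le_Sop (hp : 0 < p) (hφ : IsPenalty p φ) (hμ : MemPp p μ)
    (hf : IsBUC f) (h : IsAdmissiblePlan p φ μ t γ c) (x : Ed d) :
    ∫ q, f (x + q.2) ∂γ - c ≤ Sop p φ μ t f x := by
  have hcoupling : IsCoupling γ μ (γ.map Prod.snd) := ⟨h.map_fst, rfl⟩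
  have hcost := Wp_toNNReal_le_transportCost hp hcoupling h.cost_ne_top
  have hfx : Measurable fun y => f (x + y) :=
    hf.uniformContinuous.continuous.measurable.comp (measurable_const_add x)
  rw [hcoupling.integral_comp_snd hfx]
  exact le_Sop hf (hμ.map_snd_of_transportCost_ne_top hp h.map_fst h.cost_ne_top) h.nonneg
    ((phit_mono hφ t hcost).trans h.penalty_le)

lemma exists_isAdmissiblePlan_of_lt_Sop (hp : 1 ≤ p) (hφ : IsPenalty p φ) (hμ : MemPp p μ)
    (hf : IsBUC f) {r : ℝ} (hr : r < Sop p φ μ t f x) :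
    ∃ γ c, IsAdmissiblePlan p φ μ t γ c ∧ r < ∫ q, f (x + q.2) ∂γ - c := by
  obtain ⟨ν, c, hν, hc, hpen, hlt⟩ := exists_lt_of_lt_Sop (by positivity) hφ hμ hr
  obtain ⟨ε, hε, hrε⟩ : ∃ ε > 0, r + ε < ∫ y, f (x + y) ∂ν - c :=
    ⟨_, half_pos (sub_pos.2 hlt), by linarith⟩
  obtain ⟨γ, hγμ, hcost, hle⟩ := exists_plan_transportCost_le_Wp hp hμ hν (hf.comp_add_left x) hε
  refine ⟨γ, c, ⟨hγμ, ne_top_of_le_ne_top ENNReal.ofReal_ne_top hcost, hc, ?_⟩, by linarith⟩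
  exact (phit_mono hφ t (ENNReal.toNNReal_mono ENNReal.ofReal_ne_top hcost)).trans hpen

end AdmissiblePlans

section Gluing

open ProbabilityTheory

lemma measurePreserving_fst_compProd {X Y : Type*} [MeasurableSpace X] [MeasurableSpace Y]
    (γ : Measure X) [SFinite γ] (κ : Kernel X Y) [IsMarkovKernel κ] :
    MeasurePreserving Prod.fst (γ ⊗ₘ κ) γ :=
  ⟨measurable_fst, Measure.fst_compProd γ κ⟩

/-- The plan that first moves along `γ` and then, from the pair `q`, along `κ q`: starting points
and end points of the two displacements are added. -/
def gluedPlan {E : Type*} [NormedAddCommGroup E] [MeasurableSpace E] (γ : Measure (E × E))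
    (κ : Kernel (E × E) (E × E)) : Measure (E × E) :=
  (γ ⊗ₘ κ).map fun w => w.1 + w.2

variable {d : ℕ} {p : ℝ} {φ : ℝ≥0 → ℝ≥0∞} {μ ν : Measure (Ed d)} {s t : ℝ}
  {γ : Measure (Ed d × Ed d)} {κ : Kernel (Ed d × Ed d) (Ed d × Ed d)}

lemma map_fst_gluedPlan [SFinite γ] [IsSFiniteKernel κ] [SFinite ν] (hγ : γ.map Prod.fst = μ)
    (hκ : ∀ q, (κ q).map Prod.fst = ν) : (gluedPlan γ κ).map Prod.fst = μ.conv ν := by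
  refine Measure.ext_of_lintegral _ fun h hh => ?_
  rw [lintegral_map hh measurable_fst, gluedPlan, lintegral_map (by fun_prop) (by fun_prop),
    Measure.lintegral_compProd (by fun_prop), Measure.lintegral_conv hh, ← hγ,
    lintegral_map (by fun_prop) measurable_fst]
  refine lintegral_congr fun q => ?_
  rw [← hκ q, lintegral_map (by fun_prop) measurable_fst]
  rfl

lemma transportCost_rpow (hp : 0 < p) (γ : Measure (Ed d × Ed d)) :
    transportCost p γ ^ p = ∫⁻ q, (‖q.2 - q.1‖₊ : ℝ≥0∞) ^ p ∂γ := by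
  rw [transportCost, eLpNorm_ofReal_eq_lintegral hp, ← ENNReal.rpow_mul,
    one_div_mul_cancel hp.ne', ENNReal.rpow_one]

lemma transportCost_gluedPlan_le [SFinite γ] [IsMarkovKernel κ] (hp : 1 ≤ p) :
    transportCost p (gluedPlan γ κ) ≤
      transportCost p γ + (∫⁻ q, transportCost p (κ q) ^ p ∂γ) ^ (1 / p) := by
  have hp₀ : 0 < p := by positivity
  have hfirst : eLpNorm (fun w => w.1.2 - w.1.1) (ENNReal.ofReal p) (γ ⊗ₘ κ)
      = transportCost p γ :=
    eLpNorm_comp_measurePreserving (g := fun q : Ed d × Ed d => q.2 - q.1) (by fun_prop)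
      (measurePreserving_fst_compProd γ κ)
  have hsecond : eLpNorm (fun w => w.2.2 - w.2.1) (ENNReal.ofReal p) (γ ⊗ₘ κ)
      = (∫⁻ q, transportCost p (κ q) ^ p ∂γ) ^ (1 / p) := by
    simp only [eLpNorm_ofReal_eq_lintegral hp₀, transportCost_rpow hp₀]
    rw [Measure.lintegral_compProd (by fun_prop)]
  rw [← hfirst, ← hsecond, gluedPlan, transportCost,
    eLpNorm_map_measure (by fun_prop) (by fun_prop)]
  refine le_trans (le_of_eq ?_)
    (eLpNorm_add_le (by fun_prop) (by fun_prop) (ENNReal.one_le_ofReal.2 hp))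
  congr 1
  ext1 w
  exact add_sub_add_comm _ _ _ _

lemma IsAdmissiblePlan.mk_mem_penaltyEpigraph {c : ℝ} (hp : 0 < p)
    (h : IsAdmissiblePlan p φ μ t γ c) :
    ((transportCost p γ ^ p).toReal, c) ∈ penaltyEpigraph p φ t := by
  refine ⟨ENNReal.toReal_nonneg, h.nonneg, ?_⟩
  rw [ENNReal.toNNReal_toReal_eq, ENNReal.toNNReal_rpow, ← NNReal.rpow_mul,
    mul_one_div_cancel hp.ne', NNReal.rpow_one]
  exact h.penalty_le

-- The two displacements add up in `L^p` by Minkowski's inequality; the penalties of the second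
-- ones are averaged by Jensen's inequality for `r ↦ φ_t(r^{1/p})`.
lemma IsAdmissiblePlan.glue [IsProbabilityMeasure γ] [SFinite ν] [IsMarkovKernel κ] (hp : 1 ≤ p)
    (hφ : IsPenalty p φ) (hs : 0 ≤ s) (ht : 0 ≤ t) {c : ℝ} {e : Ed d × Ed d → ℝ}
    (hγ : IsAdmissiblePlan p φ μ s γ c) (hκ : ∀ q, IsAdmissiblePlan p φ ν t (κ q) (e q))
    (he : Integrable e γ) (hcost : Integrable (fun q => (transportCost p (κ q) ^ p).toReal) γ) :
    IsAdmissiblePlan p φ (μ.conv ν) (s + t) (gluedPlan γ κ) (c + ∫ q, e q ∂γ) := by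
  have hp₀ : 0 < p := by positivity
  obtain ⟨-, he₀, hpen⟩ := integral_mem_penaltyEpigraph hp₀ hφ t hcost he
    fun q => (hκ q).mk_mem_penaltyEpigraph hp₀
  have hpow (q) : transportCost p (κ q) ^ p ≠ ∞ :=
    ENNReal.rpow_ne_top_of_nonneg hp₀.le (hκ q).cost_ne_top
  have hmean : ∫⁻ q, transportCost p (κ q) ^ p ∂γ
      = ENNReal.ofReal (∫ q, (transportCost p (κ q) ^ p).toReal ∂γ) := by
    rw [ofReal_integral_eq_lintegral_ofReal hcost (ae_of_all _ fun _ => ENNReal.toReal_nonneg)]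
    simp only [ENNReal.ofReal_toReal (hpow _)]
  have hle := transportCost_gluedPlan_le (γ := γ) (κ := κ) hp
  rw [hmean] at hle
  have hfin : ENNReal.ofReal (∫ q, (transportCost p (κ q) ^ p).toReal ∂γ) ^ (1 / p) ≠ ∞ :=
    ENNReal.rpow_ne_top_of_nonneg (by positivity) ENNReal.ofReal_ne_top
  have hsum := ENNReal.add_ne_top.2 ⟨hγ.cost_ne_top, hfin⟩
  refine ⟨map_fst_gluedPlan hγ.map_fst fun q => (hκ q).map_fst, ne_top_of_le_ne_top hsum hle,
    add_nonneg hγ.nonneg he₀, ?_⟩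
  rw [ENNReal.ofReal_add hγ.nonneg he₀]
  refine (phit_mono hφ _ (ENNReal.toNNReal_mono hsum hle)).trans ?_
  rw [ENNReal.toNNReal_add hγ.cost_ne_top hfin, ENNReal.toNNReal_rpow]
  exact (phit_add_le hφ hs ht _ _).trans (add_le_add hγ.penalty_le hpen)

end Gluing

section Selection

open ProbabilityTheory

variable {Ω : Type*} [MeasurableSpace Ω] {γ : Measure Ω}

lemma exists_simpleFunc_integral_dist_lt {E : Type*} [NormedAddCommGroup E] {u : Ω → E}
    (hu : Integrable u γ) {ε : ℝ} (hε : 0 < ε) :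
    ∃ π : SimpleFunc Ω E, Integrable (fun ω => dist (u ω) (π ω)) γ ∧
      ∫ ω, dist (u ω) (π ω) ∂γ < ε := by
  obtain ⟨π, hπ, hπL⟩ := (memLp_one_iff_integrable.2 hu).exists_simpleFunc_eLpNorm_sub_lt
    ENNReal.one_ne_top (ENNReal.ofReal_pos.2 hε).ne'
  have hsub : Integrable (fun ω => u ω - π ω) γ := hu.sub (memLp_one_iff_integrable.1 hπL)
  simp only [dist_eq_norm]
  refine ⟨π, hsub.norm, ?_⟩
  rw [integral_norm_eq_lintegral_enorm hsub.1, ← eLpNorm_one_eq_lintegral_enorm]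
  exact (ENNReal.lt_ofReal_iff_toReal_lt hπ.ne_top).1 hπ

/-- The kernel `ω ↦ Γ (π ω)`. As `π` is simple, no measurability of `Γ` is needed. -/
def simpleFuncKernel {X Y : Type*} [MeasurableSpace Y] (π : SimpleFunc Ω X) (Γ : X → Measure Y) :
    Kernel Ω Y :=
  ⟨fun ω => Γ (π ω), (π.map Γ).measurable⟩

variable [IsProbabilityMeasure γ] {d : ℕ} {p : ℝ} {φ : ℝ≥0 → ℝ≥0∞} {μ : Measure (Ed d)} {t : ℝ}
  {f : Ed d → ℝ}

lemma IsBUC.integral_compProd_add_snd_le {κ : Kernel Ω (Ed d × Ed d)} [IsMarkovKernel κ]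
    (hf : IsBUC f) {ε C : ℝ} (hC : ∀ a b, f a ≤ f b + ε + C * dist a b) {u v : Ω → Ed d}
    (hu : Measurable u) (hv : Measurable v) (huv : Integrable (fun ω => dist (u ω) (v ω)) γ) :
    ∫ w, f (u w.1 + w.2.2) ∂(γ ⊗ₘ κ) ≤
      ∫ w, f (v w.1 + w.2.2) ∂(γ ⊗ₘ κ) + ε + C * ∫ ω, dist (u ω) (v ω) ∂γ := by
  have hdist : Integrable (fun w : Ω × Ed d × Ed d => dist (u w.1) (v w.1)) (γ ⊗ₘ κ) :=
    (measurePreserving_fst_compProd γ κ).integrable_comp_of_integrable huv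
  have hmarginal : ∫ w, dist (u w.1) (v w.1) ∂(γ ⊗ₘ κ) = ∫ ω, dist (u ω) (v ω) ∂γ := by
    simp only [Measure.integral_compProd hdist, integral_const, probReal_univ, one_smul]
  have hle := hf.integral_comp_le_add_mul_integral_dist (γ := γ ⊗ₘ κ) hC
    (u := fun w => u w.1 + w.2.2) (v := fun w => v w.1 + w.2.2) (by fun_prop) (by fun_prop)
    (by simpa only [dist_add_right] using hdist)
  simpa only [dist_add_right, hmarginal] using hle

lemma integral_le_integral_simpleFuncKernel (hf : IsBUC f) {g : Ed d → ℝ} (hg : IsBUC g)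
    (π : SimpleFunc Ω (Ed d)) {Γ : Ed d → Measure (Ed d × Ed d)}
    [IsMarkovKernel (simpleFuncKernel π Γ)] {c : Ed d → ℝ} {ε : ℝ}
    (hΓ : ∀ y, g y ≤ ∫ q, f (y + q.2) ∂Γ y - c y + ε) :
    ∫ ω, g (π ω) ∂γ ≤
      ∫ w, f (π w.1 + w.2.2) ∂(γ ⊗ₘ simpleFuncKernel π Γ) - ∫ ω, c (π ω) ∂γ + ε := by
  have hfint : Integrable (fun w => f (π w.1 + w.2.2)) (γ ⊗ₘ simpleFuncKernel π Γ) :=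
    hf.integrable_comp (by fun_prop)
  rw [Measure.integral_compProd hfint]
  have hG : Integrable (fun ω => ∫ q, f (π ω + q.2) ∂Γ (π ω)) γ :=
    (π.map fun y => ∫ q, f (y + q.2) ∂Γ y).integrable_of_isFiniteMeasure
  have hc : Integrable (fun ω => c (π ω)) γ := (π.map c).integrable_of_isFiniteMeasure
  have hle := integral_mono (hg.integrable_comp π.measurable)
    ((hG.sub hc).add (integrable_const ε)) fun ω => hΓ (π ω)
  rwa [integral_add' (hG.sub hc) (integrable_const ε), integral_sub' hG hc, integral_const,
    probReal_univ, one_smul] at hle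

-- Plans are chosen only at the finitely many values of a simple function close to `u`, which makes
-- the choice measurable; the error is controlled by the modulus of continuity of `f`.
lemma exists_kernel_isAdmissiblePlan_integral_Sop_le (hp : 1 ≤ p) (hφ : IsPenalty p φ)
    (hμ : MemPp p μ) (t : ℝ) (hf : IsBUC f) {u : Ω → Ed d} (hu : Measurable u)
    (huint : Integrable u γ) {ε : ℝ} (hε : 0 < ε) :
    ∃ (κ : Kernel Ω (Ed d × Ed d)) (c : Ω → ℝ), IsMarkovKernel κ ∧
      (∀ ω, IsAdmissiblePlan p φ μ t (κ ω) (c ω)) ∧ Integrable c γ ∧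
      Integrable (fun ω => (transportCost p (κ ω) ^ p).toReal) γ ∧
      ∫ ω, Sop p φ μ t f (u ω) ∂γ ≤
        ∫ w, f (u w.1 + w.2.2) ∂(γ ⊗ₘ κ) - ∫ ω, c ω ∂γ + ε := by
  have := hμ.1
  have hS := isConvexExpectation_Sop hp hφ hμ t
  have hε₅ : 0 < ε / 5 := by positivity
  obtain ⟨C, hC, hfC⟩ := hf.exists_le_add_mul_dist hε₅
  obtain ⟨δ, hδ, hCδ⟩ : ∃ δ > 0, C * δ < ε / 5 := exists_pos_mul_lt hε₅ C
  obtain ⟨π, hπint, hπ⟩ := exists_simpleFunc_integral_dist_lt huint hδ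
  choose Γ c hadm hΓ using fun y => exists_isAdmissiblePlan_of_lt_Sop hp hφ hμ hf (t := t)
    (sub_lt_self (Sop p φ μ t f y) hε₅)
  have : IsMarkovKernel (simpleFuncKernel π Γ) := ⟨fun ω => (hadm (π ω)).isProbabilityMeasure⟩
  refine ⟨simpleFuncKernel π Γ, fun ω => c (π ω), this, fun ω => hadm (π ω),
    (π.map c).integrable_of_isFiniteMeasure,
    (π.map fun y => (transportCost p (Γ y) ^ p).toReal).integrable_of_isFiniteMeasure, ?_⟩
  have hCπ : C * ∫ ω, dist (u ω) (π ω) ∂γ ≤ C * δ := by gcongr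
  have hdiscretize := (hS.isBUC hf).integral_comp_le_add_mul_integral_dist
    (hS.le_add_mul_dist hf hfC) hu π.measurable hπint
  have hselect := integral_le_integral_simpleFuncKernel (γ := γ) hf (hS.isBUC hf) π
    fun y => (sub_le_iff_le_add.1 (hΓ y).le)
  simp only [dist_comm (u _)] at hπint hCπ hdiscretize
  have hundo := hf.integral_compProd_add_snd_le (κ := simpleFuncKernel π Γ) hfC π.measurable hu
    hπint
  linarith

end Selection

lemma Sop_Sop_le {d : ℕ} {p : ℝ} {φ : ℝ≥0 → ℝ≥0∞} {μ ν : Measure (Ed d)} {s t : ℝ}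
    {f : Ed d → ℝ} (hp : 1 ≤ p) (hφ : IsPenalty p φ) (hμ : MemPp p μ) (hν : MemPp p ν)
    (hs : 0 ≤ s) (ht : 0 ≤ t) (hf : IsBUC f) (x : Ed d) :
    Sop p φ μ s (Sop p φ ν t f) x ≤ Sop p φ (μ.conv ν) (s + t) f x := by
  have hp₀ : 0 < p := by positivity
  have := hμ.1
  have := hν.1
  refine le_of_forall_lt_imp_le_of_dense fun r hr => ?_
  obtain ⟨γ, c, hγ, hrγ⟩ := exists_isAdmissiblePlan_of_lt_Sop hp hφ hμ
    ((isConvexExpectation_Sop hp hφ hν t).isBUC hf) hr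
  have := hγ.isProbabilityMeasure
  have hsnd := hμ.map_snd_of_transportCost_ne_top hp₀ hγ.map_fst hγ.cost_ne_top
  have hend : Integrable (fun q : Ed d × Ed d => x + q.2) γ := by
    have := (hsnd.memLp_id hp₀).comp_measurePreserving ⟨measurable_snd, rfl⟩
    exact (integrable_const x).add (this.integrable (ENNReal.one_le_ofReal.2 hp))
  obtain ⟨κ, e, _, hκ, he, hcost, hle⟩ := exists_kernel_isAdmissiblePlan_integral_Sop_le hp hφ hν t
    hf (by fun_prop) hend (sub_pos.2 hrγ)
  have hglue := (hγ.glue hp hφ hs ht hκ he hcost).integral_sub_le_Sop hp₀ hφ (hμ.conv hp hν) hf x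
  have hfm : AEStronglyMeasurable (fun q : Ed d × Ed d => f (x + q.2)) (gluedPlan γ κ) :=
    (hf.uniformContinuous.continuous.comp (by fun_prop)).aestronglyMeasurable
  rw [gluedPlan, integral_map (by fun_prop) hfm] at hglue
  simp only [Prod.snd_add, ← add_assoc] at hglue
  linarith

theorem stmt_7_general {d : ℕ} {p : ℝ} (hp : 1 ≤ p) {φ : ℝ≥0 → ℝ≥0∞} (hφ : IsPenalty p φ)
    {μ : ℝ → Measure (Ed d)} (hμ : IsConvSemigroup p μ) {t : ℝ} (ht : 0 ≤ t) (f g : C₀(Ed d, ℝ)) :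
    (∀ x, Antitone fun n => SiterN p φ μ n t (⇑f) x) ∧
    TendstoUniformly (fun n x => SiterN p φ μ n t (⇑f) x) (Slim p φ μ t (⇑f)) atTop ∧
    IsC0 (Slim p φ μ t (⇑f)) ∧
    (∀ x, Slim p φ μ t (fun _ => (0:ℝ)) x = 0) ∧
    ((∀ x, f x ≤ g x) → ∀ x, Slim p φ μ t (⇑f) x ≤ Slim p φ μ t (⇑g) x) ∧
    (∀ x, |Slim p φ μ t (⇑f) x - Slim p φ μ t (⇑g) x| ≤ ‖f - g‖) ∧
    (∀ l : ℝ, 0 ≤ l → l ≤ 1 → ∀ x,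
      Slim p φ μ t (fun y => l * f y + (1 - l) * g y) x ≤
        l * Slim p φ μ t (⇑f) x + (1 - l) * Slim p φ μ t (⇑g) x) := by
  obtain ⟨-, hconv, hPp⟩ := hμ
  let S (s : ℝ) : (Ed d → ℝ) → Ed d → ℝ := Sop p φ (μ s) s
  have hS (s : ℝ) (hs : 0 ≤ s) : IsConvexExpectation (S s) :=
    isConvexExpectation_Sop hp hφ (hPp s hs) s
  have hsub {s r : ℝ} {h : Ed d → ℝ} (hs : 0 ≤ s) (hr : 0 ≤ r) (hh : IsBUC h) (x : Ed d) :
      S s (S r h) x ≤ S (s + r) h x := by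
    simpa only [S, hconv s r hs hr] using Sop_Sop_le hp hφ (hPp s hs) (hPp r hr) hs hr hh x
  have hiter : ∀ n, IsConvexExpectation (SiterN p φ μ n t) :=
    isConvexExpectation_dyadicIterate hS ht
  have hanti {h : Ed d → ℝ} (hh : IsBUC h) : ∀ x, Antitone fun n => SiterN p φ μ n t h x :=
    antitone_dyadicIterate hS hsub ht hh
  have hlim : IsConvexExpectation (Slim p φ μ t) := .iInf hiter hanti
  have hf := (isC0_coe f).isBUC
  have hg := (isC0_coe g).isBUC
  exact ⟨hanti hf, IsConvexExpectation.tendstoUniformly_iInf hiter hanti (isC0_coe f),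
    hlim.isC0 (isC0_coe f), hlim.map_zero, hlim.mono hf hg,
    hlim.abs_sub_le hf hg fun y => (f - g).toBCF.norm_coe_le_norm y,
    fun l hl₀ hl₁ => hlim.convex hf hg hl₀ hl₁⟩

/-- the decreasing limit `𝒮(t)f = lim_n 𝒮ⁿ(t)f` exists and converges
uniformly, `𝒮(t)f ∈ C₀(ℝ^d)`, and `𝒮(t)` is a normalized, monotone, contractive,
convex operator. -/
theorem stmt_7 (d : ℕ) (hd : 1 ≤ d) (p : ℝ) (hp : 1 < p)
    (φ : ℝ≥0 → ℝ≥0∞) (hφ : IsPenalty p φ)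
    (μ : ℝ → Measure (Ed d)) (hμ : IsConvSemigroup p μ)
    (t : ℝ) (ht : 0 ≤ t) (f g : C₀(Ed d, ℝ)) :
    -- (i) the decreasing pointwise limit exists and convergence is uniform
    (∀ x, Antitone fun n => SiterN p φ μ n t (⇑f) x) ∧
    TendstoUniformly (fun n x => SiterN p φ μ n t (⇑f) x) (Slim p φ μ t (⇑f)) atTop ∧
    -- (ii) `𝒮(t)f ∈ C₀(ℝ^d)`
    IsC0 (Slim p φ μ t (⇑f)) ∧
    -- (iii) `𝒮(t)0 = 0`
    (∀ x, Slim p φ μ t (fun _ => (0:ℝ)) x = 0) ∧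
    -- (iv) monotonicity
    ((∀ x, f x ≤ g x) → ∀ x, Slim p φ μ t (⇑f) x ≤ Slim p φ μ t (⇑g) x) ∧
    -- (v) contractivity
    (∀ x, |Slim p φ μ t (⇑f) x - Slim p φ μ t (⇑g) x| ≤ ‖f - g‖) ∧
    -- (vi) convexity
    (∀ l : ℝ, 0 ≤ l → l ≤ 1 → ∀ x,
      Slim p φ μ t (fun y => l * f y + (1 - l) * g y) x ≤
        l * Slim p φ μ t (⇑f) x + (1 - l) * Slim p φ μ t (⇑g) x) :=
  stmt_7_general hp.le hφ hμ ht f g
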